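/- Let A be a finite set, π a probability distribution on A, J a self-coupling of π, 0 < ε < 1, and N > 0 an integer. Let φ : {1,…,N} → A have empirical distribution π' with ‖π' − π‖_∞ < ε, and assume min_{a,b∈A} J(a,b) > 2|A|ε + |A|²/N. Then there exists a bijection σ : {1,…,N−1} → {2,…,N} such that (1) the graph on vertices {1,…,N} with edges {(i,σ(i)) : 1 ≤ i ≤ N−1} is connected (isomorphic to a line graph), and (2) the empirical distribution J_σ of the map i ↦ (φ(i), φ(σ(i))) satisfies ‖J_σ − J‖_∞ < 2|A|ε + 3|A|²/N. -/

import Mathlib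

/-- The graph on `{1,…,N}` (encoded as `Fin N`) whose edges are the pairs `(i, σ i)`
for `i ∈ {1,…,N−1}` (encoded as the indices with `i.val < N - 1`). -/
def lineGraph {N : ℕ} (σ : Equiv.Perm (Fin N)) : SimpleGraph (Fin N) :=
  SimpleGraph.fromRel (fun i j => i.val < N - 1 ∧ σ i = j)

theorem aux_equiv {E F A : Type*} [Fintype E] [Fintype F] [DecidableEq A]
    (u : E → A) (v : F → A)
    (h : ∀ a, (Finset.univ.filter (fun e => u e = a)).card
      = (Finset.univ.filter (fun e => v e = a)).card) :
    ∃ f : E ≃ F, ∀ e, v (f e) = u e := by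
  have h2 : ∀ a, Nonempty ({e // u e = a} ≃ {e // v e = a}) := by
    intro a
    refine ⟨Fintype.equivOfCardEq ?_⟩
    rw [Fintype.card_subtype, Fintype.card_subtype]
    exact h a
  let g := fun a => Classical.choice (h2 a)
  refine ⟨(Equiv.sigmaFiberEquiv u).symm.trans
    ((Equiv.sigmaCongrRight g).trans (Equiv.sigmaFiberEquiv v)), ?_⟩
  intro e
  exact (g (u e) ⟨e, rfl⟩).2

theorem aux_perm {V A : Type*} [Fintype V] [Fintype A] [DecidableEq A]
    (φ : V → A) (m : A → A → ℕ)
    (h1 : ∀ a, ∑ b, m a b = (Finset.univ.filter (fun i => φ i = a)).card)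
    (h2 : ∀ b, ∑ a, m a b = (Finset.univ.filter (fun i => φ i = b)).card) :
    ∃ σ : Equiv.Perm V, ∀ a b,
      (Finset.univ.filter (fun i => φ i = a ∧ φ (σ i) = b)).card = m a b := by
  obtain ⟨f, hf⟩ := aux_equiv (E := Σ p : A × A, Fin (m p.1 p.2)) (fun e => e.1.1) φ (by
    intro a
    rw [← h1 a, Finset.card_filter, Fintype.sum_sigma, Fintype.sum_prod_type]
    simp [apply_ite])
  obtain ⟨g, hg⟩ := aux_equiv (E := Σ p : A × A, Fin (m p.1 p.2)) (fun e => e.1.2) φ (by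
    intro a
    rw [← h2 a, Finset.card_filter, Fintype.sum_sigma, Fintype.sum_prod_type]
    simp [apply_ite])
  refine ⟨f.symm.trans g, ?_⟩
  intro a b
  have : (Finset.univ.filter (fun i => φ i = a ∧ φ ((f.symm.trans g) i) = b)).card
      = (Finset.univ.filter (fun e : Σ p : A × A, Fin (m p.1 p.2) =>
          e.1.1 = a ∧ e.1.2 = b)).card := by
    apply Finset.card_equiv f.symm
    intro i
    have := hf (f.symm i)
    simp only [Equiv.apply_symm_apply] at this
    simp [hg, this]
  rw [this, Finset.card_filter, Fintype.sum_sigma, Fintype.sum_prod_type]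
  rw [Finset.sum_eq_single a, Finset.sum_eq_single b]
  · simp
  · intro x _ hx; simp [hx]
  · simp
  · intro x _ hx; simp [hx]
  · simp

theorem aux_chain {V : Type*} [Finite V] (σ τ : Equiv.Perm V) (i z : V)
    (h : ∀ w, σ.SameCycle i w → w ≠ i → τ w = σ w) (hz : σ.SameCycle i z) :
    τ.SameCycle (σ i) z := by
  have key : ∀ n : ℕ, τ.SameCycle (σ i) ((σ ^ (n + 1)) i) := by
    intro n
    induction n with
    | zero => simpa using Equiv.Perm.SameCycle.refl τ (σ i)
    | succ n ih =>
      rw [pow_succ' σ (n + 1), Equiv.Perm.mul_apply]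
      by_cases hw : (σ ^ (n + 1)) i = i
      · rw [hw]
      · rw [← h _ ⟨((n + 1 : ℕ) : ℤ), by rw [zpow_natCast]⟩ hw]
        exact Equiv.Perm.sameCycle_apply_right.2 ih
  obtain ⟨n, hn, _, h3⟩ := hz.exists_pow_eq''
  obtain ⟨k, rfl⟩ : ∃ k, n = k + 1 := ⟨n - 1, by omega⟩
  rw [← h3]
  exact key k

theorem aux_cyclic {V A : Type*} [Fintype V] [DecidableEq V] [Fintype A] [DecidableEq A]
    (φ : V → A) (m : A → A → ℕ) (hm : ∀ a b, 0 < m a b) (x0 : V)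
    (h1 : ∀ a, ∑ b, m a b = (Finset.univ.filter (fun i => φ i = a)).card)
    (h2 : ∀ b, ∑ a, m a b = (Finset.univ.filter (fun i => φ i = b)).card) :
    ∃ σ : Equiv.Perm V, (∀ a b,
      (Finset.univ.filter (fun i => φ i = a ∧ φ (σ i) = b)).card = m a b) ∧
      ∀ z, σ.SameCycle x0 z := by
  classical
  let S : Finset (Equiv.Perm V) := Finset.univ.filter (fun σ => ∀ a b,
      (Finset.univ.filter (fun i => φ i = a ∧ φ (σ i) = b)).card = m a b)
  have hS : S.Nonempty := by
    obtain ⟨σ, hσ⟩ := aux_perm φ m h1 h2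
    exact ⟨σ, by simp only [S, Finset.mem_filter]; exact ⟨Finset.mem_univ _, hσ⟩⟩
  obtain ⟨σ, hσ, hmax⟩ := Finset.exists_max_image S
    (fun σ => (Finset.univ.filter (fun z => σ.SameCycle x0 z)).card) hS
  have hσ' := (Finset.mem_filter.1 hσ).2
  have noclash : ∀ i j, σ.SameCycle x0 i → ¬ σ.SameCycle x0 j → φ i ≠ φ j := by
    intro i j hi hj hij
    have hnij : ¬ σ.SameCycle i j := fun h => hj (hi.trans h)
    let τ : Equiv.Perm V := σ * Equiv.swap i j
    have hτi : τ i = σ j := by simp [τ]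
    have hτj : τ j = σ i := by simp [τ]
    have hτ : ∀ w, w ≠ i → w ≠ j → τ w = σ w := by
      intro w h1 h2
      simp [τ, Equiv.swap_apply_of_ne_of_ne h1 h2]
    have A1 : ∀ z, σ.SameCycle i z → τ.SameCycle (σ i) z := fun z hz =>
      aux_chain σ τ i z (fun w hw hwi => hτ w hwi (fun h => hnij (h ▸ hw))) hz
    have A2 : ∀ z, σ.SameCycle j z → τ.SameCycle (σ j) z := fun z hz =>
      aux_chain σ τ j z (fun w hw hwj => hτ w (fun h => hnij (h ▸ hw).symm) hwj) hz
    have hx0i : τ.SameCycle x0 i := (A1 x0 hi.symm).symm.trans (A1 i (Equiv.Perm.SameCycle.refl _ _))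
    have hτS : τ ∈ S := by
      simp only [S, Finset.mem_filter]
      refine ⟨Finset.mem_univ _, fun a b => ?_⟩
      rw [← hσ' a b]
      apply Finset.card_equiv (Equiv.swap i j)
      intro k
      have : φ (Equiv.swap i j k) = φ k := by
        rw [Equiv.swap_apply_def]; split_ifs with h h' <;> simp_all
      have h3 : σ (Equiv.swap i j k) = τ k := rfl
      simp only [Finset.mem_filter, Finset.mem_univ, true_and, this, h3]
    have := hmax τ hτS
    refine absurd this (not_le.2 (Finset.card_lt_card ?_))
    rw [Finset.ssubset_iff_of_subset]
    · refine ⟨j, ?_, by simpa using hj⟩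
      simp only [Finset.mem_filter, Finset.mem_univ, true_and]
      have e1 : τ.SameCycle i (σ j) := by
        rw [← hτi]; exact Equiv.Perm.sameCycle_apply_right.2 (Equiv.Perm.SameCycle.refl _ _)
      exact hx0i.trans (e1.trans (A2 j (Equiv.Perm.SameCycle.refl _ _)))
    · intro z
      simp only [Finset.mem_filter, Finset.mem_univ, true_and]
      intro hz
      exact (A1 x0 hi.symm).symm.trans (A1 z (hi.symm.trans hz))
  refine ⟨σ, hσ', ?_⟩
  intro y
  by_contra hy
  have hp : 0 < (Finset.univ.filter (fun i => φ i = φ x0 ∧ φ (σ i) = φ y)).card := by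
    rw [hσ']; exact hm _ _
  obtain ⟨k, hk⟩ := Finset.card_pos.1 hp
  simp only [Finset.mem_filter, Finset.mem_univ, true_and] at hk
  by_cases hkC : σ.SameCycle x0 k
  · exact noclash (σ k) y (Equiv.Perm.sameCycle_apply_right.2 hkC) hy hk.2
  · exact noclash x0 k (Equiv.Perm.SameCycle.refl _ _) hkC hk.1.symm

theorem aux_round {A : Type*} [Fintype A] [DecidableEq A] [Nonempty A]
    (x : A → A → ℝ) (c : A → ℕ)
    (h1 : ∀ a, ∑ b, x a b = c a) (h2 : ∀ b, ∑ a, x a b = c b)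
    (hx : ∀ a b, (Fintype.card A : ℝ) ^ 2 < x a b) :
    ∃ m : A → A → ℕ, (∀ a b, 0 < m a b) ∧ (∀ a, ∑ b, m a b = c a) ∧
      (∀ b, ∑ a, m a b = c b) ∧ ∀ a b, |(m a b : ℝ) - x a b| ≤ (Fintype.card A : ℝ) ^ 2 := by
  obtain ⟨a0⟩ := ‹Nonempty A›
  set K : ℝ := (Fintype.card A : ℝ) with hK
  have hK1 : 1 ≤ K := by
    have : 0 < Fintype.card A := Fintype.card_pos_iff.2 ⟨a0⟩
    rw [hK]; exact_mod_cast this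
  let d : A → A → ℝ := fun a b => Int.fract (x a b)
  have d0 : ∀ a b, 0 ≤ d a b := fun a b => Int.fract_nonneg _
  have d1 : ∀ a b, d a b ≤ 1 := fun a b => (Int.fract_lt_one _).le
  let F : A → A → ℤ := fun a b => ⌊x a b⌋
  have hF : ∀ a b, (F a b : ℝ) = x a b - d a b := fun a b => by
    simp only [F, d, Int.fract]; ring
  let r : A → ℤ := fun a => c a - ∑ b, F a b
  let q : A → ℤ := fun b => c b - ∑ a, F a b
  let T : ℤ := ∑ a, r a
  have hr : ∀ a, (r a : ℝ) = ∑ b, d a b := by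
    intro a; simp only [r]; push_cast; simp only [hF, Finset.sum_sub_distrib, h1]; ring
  have hq : ∀ b, (q b : ℝ) = ∑ a, d a b := by
    intro b; simp only [q]; push_cast; simp only [hF, Finset.sum_sub_distrib, h2]; ring
  have hT : (T : ℝ) = ∑ a, ∑ b, d a b := by
    simp only [T]; push_cast; simp only [hr]
  have hT2 : T = ∑ b, q b := by
    have : (T : ℝ) = ((∑ b, q b : ℤ) : ℝ) := by
      push_cast; rw [hT, Finset.sum_comm]; simp only [hq]
    exact_mod_cast this
  have hrK : ∀ a, (r a : ℝ) ≤ K := by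
    intro a; rw [hr]
    calc ∑ b, d a b ≤ ∑ b : A, (1 : ℝ) := Finset.sum_le_sum (fun b _ => d1 a b)
      _ = K := by simp [hK]
  have hqK : ∀ a, (q a : ℝ) ≤ K := by
    intro b; rw [hq]
    calc ∑ a, d a b ≤ ∑ b : A, (1 : ℝ) := Finset.sum_le_sum (fun a _ => d1 a b)
      _ = K := by simp [hK]
  have hrd : ∀ a b, d a b ≤ r a := by
    intro a b; rw [hr]
    exact Finset.single_le_sum (f := fun b => d a b) (fun b _ => d0 a b) (Finset.mem_univ b)
  have hqd : ∀ a b, d a b ≤ q b := by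
    intro a b; rw [hq]
    exact Finset.single_le_sum (f := fun a => d a b) (fun a _ => d0 a b) (Finset.mem_univ a)
  have hTK : (T : ℝ) ≤ K ^ 2 := by
    simp only [T]; push_cast
    calc ∑ a, (r a : ℝ) ≤ ∑ b : A, K := Finset.sum_le_sum (fun a _ => hrK a)
      _ = K ^ 2 := by simp [← hK]; ring
  have hrT : ∀ a, (r a : ℝ) ≤ T := by
    intro a; simp only [T]; push_cast
    exact Finset.single_le_sum (f := fun a => (r a : ℝ))
      (fun a _ => (d0 a a).trans (hrd a a)) (Finset.mem_univ a)
  have hKK : K ≤ K ^ 2 := by nlinarith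
  let M : A → A → ℤ := fun a b => F a b + (if b = a0 then r a else 0) + (if a = a0 then q b else 0)
    - (if a = a0 then (if b = a0 then T else 0) else 0)
  have hM : ∀ a b, |(M a b : ℝ) - x a b| ≤ K ^ 2 := by
    intro a b
    have e1 := hrd a b
    have e2 := hqd a b
    have e3 := hrK a
    have e4 := hqK b
    have e5 := hrT a
    have e6 := d0 a b
    have e7 := d1 a b
    simp only [M]
    rw [abs_le]
    split_ifs <;> push_cast <;> rw [hF] <;> constructor <;> linarith
  have hMpos : ∀ a b, 0 < M a b := by
    intro a b
    have := (abs_le.1 (hM a b)).1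
    have h := hx a b
    have : (0 : ℝ) < M a b := by linarith
    exact_mod_cast this
  have hcast : ∀ a b, ((M a b).toNat : ℤ) = M a b := fun a b => Int.toNat_of_nonneg (hMpos a b).le
  refine ⟨fun a b => (M a b).toNat, fun a b => ?_, fun a => ?_, fun b => ?_, fun a b => ?_⟩
  · have := hMpos a b; show 0 < (M a b).toNat; omega
  · zify
    simp only [hcast]
    simp only [M, Finset.sum_add_distrib, Finset.sum_sub_distrib]
    by_cases h : a = a0
    · simp [h, ← hT2, r]
    · simp [h, r]
  · zify
    simp only [hcast]
    simp only [M, Finset.sum_add_distrib, Finset.sum_sub_distrib]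
    by_cases h : b = a0
    · simp only [h, Finset.sum_ite_eq', if_true, Finset.mem_univ]
      change _ + T + _ - _ = _
      simp [q]
      ring
    · simp [h, q]
  · have : (((M a b).toNat : ℕ) : ℝ) = (M a b : ℝ) := by exact_mod_cast hcast a b
    rw [this]; exact hM a b


theorem aux_place {V A : Type*} [Fintype V] [DecidableEq V] [Fintype A] [DecidableEq A]
    (φ : V → A) (m : A → A → ℕ) (hm : ∀ a b, 0 < m a b) (s t : V) (hst : t ≠ s)
    (h1 : ∀ a, ∑ b, m a b = (Finset.univ.filter (fun i => φ i = a)).card)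
    (h2 : ∀ b, ∑ a, m a b = (Finset.univ.filter (fun i => φ i = b)).card) :
    ∃ σ : Equiv.Perm V, (∀ a b,
      (Finset.univ.filter (fun i => φ i = a ∧ φ (σ i) = b)).card = m a b) ∧
      σ t = s ∧ ∀ z, σ.SameCycle s z := by
  obtain ⟨σ, hσ, hcyc⟩ := aux_cyclic φ m hm s h1 h2
  have hp : 0 < (Finset.univ.filter (fun i => φ i = φ t ∧ φ (σ i) = φ s)).card := by
    rw [hσ]; exact hm _ _
  obtain ⟨x, hx⟩ := Finset.card_pos.1 hp
  simp only [Finset.mem_filter, Finset.mem_univ, true_and] at hx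
  have hne : σ x ≠ x := by
    intro h
    have e : ∀ z, x = z := by
      intro z
      have : σ.SameCycle x z := (hcyc x).symm.trans (hcyc z)
      obtain ⟨n, hn⟩ := this
      rw [← hn, Equiv.Perm.zpow_apply_eq_self_of_apply_eq_self h]
    exact hst ((e t).symm.trans (e s))
  have hsw : ∀ i j k, φ i = φ j → φ (Equiv.swap i j k) = φ k := by
    intro i j k hij
    rw [Equiv.swap_apply_def]; split_ifs with h h' <;> simp_all
  set y' := Equiv.swap x t (σ x) with hy'
  have hy't : t ≠ y' := by
    intro h
    have : Equiv.swap x t x = Equiv.swap x t (σ x) := by rw [Equiv.swap_apply_left]; exact h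
    exact hne ((Equiv.swap x t).injective this).symm
  have hφy' : φ y' = φ s := by rw [hy', hsw _ _ _ hx.1, hx.2]
  let τ : Equiv.Perm V := Equiv.swap y' s * Equiv.swap x t
  have hτφ : ∀ k, φ (τ k) = φ k := by
    intro k
    simp only [τ, Equiv.Perm.mul_apply]
    rw [hsw _ _ _ hφy', hsw _ _ _ hx.1]
  have hτx : τ x = t := by
    simp only [τ, Equiv.Perm.mul_apply, Equiv.swap_apply_left]
    exact Equiv.swap_apply_of_ne_of_ne hy't hst
  have hτy : τ (σ x) = s := by
    simp only [τ, Equiv.Perm.mul_apply, ← hy', Equiv.swap_apply_left]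
  refine ⟨τ * σ * τ⁻¹, fun a b => ?_, ?_, fun z => ?_⟩
  · rw [← hσ a b]
    apply Finset.card_equiv τ⁻¹
    intro k
    have e1 : φ (τ⁻¹ k) = φ k := by rw [← hτφ (τ⁻¹ k)]; simp
    have e2 : φ ((τ * σ * τ⁻¹) k) = φ (σ (τ⁻¹ k)) := by
      simp only [Equiv.Perm.mul_apply, hτφ]
    simp only [Finset.mem_filter, Finset.mem_univ, true_and, e1, e2]
  · have : τ⁻¹ t = x := by rw [← hτx]; simp
    simp only [Equiv.Perm.mul_apply, this, hτy]
  · rw [Equiv.Perm.sameCycle_conj]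
    exact (hcyc _).symm.trans (hcyc _)

theorem aux_conn {N : ℕ} (σ : Equiv.Perm (Fin N)) (s t : Fin N) (ht : t.val = N - 1)
    (hts : σ t = s) (hc : ∀ z, σ.SameCycle s z) : (lineGraph σ).Connected := by
  have key : ∀ n : ℕ, (lineGraph σ).Reachable s ((σ ^ n) s) := by
    intro n
    induction n with
    | zero => simp
    | succ n ih =>
      rw [pow_succ', Equiv.Perm.mul_apply]
      by_cases hw : (σ ^ n) s = t
      · rw [hw, hts]
      · by_cases hf : (σ ^ n) s = σ ((σ ^ n) s)
        · rw [← hf]; exact ih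
        · refine ih.trans (SimpleGraph.Adj.reachable ?_)
          unfold lineGraph
          rw [SimpleGraph.fromRel_adj]
          refine ⟨hf, Or.inl ⟨?_, rfl⟩⟩
          have h1 := ((σ ^ n) s).isLt
          have h2 : ((σ ^ n) s).val ≠ t.val := fun h => hw (Fin.ext h)
          omega
  have key2 : ∀ z, (lineGraph σ).Reachable s z := by
    intro z
    obtain ⟨n, _, _, hn⟩ := (hc z).exists_pow_eq''
    rw [← hn]; exact key n
  have : Nonempty (Fin N) := ⟨s⟩
  exact ⟨fun u v => (key2 u).symm.trans (key2 v)⟩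


theorem stmt4 {A : Type*} [Fintype A] [DecidableEq A]
    (N : ℕ) (hN : 0 < N)
    (π : A → ℝ) (J : A → A → ℝ) (ε : ℝ) (hε : 0 < ε) (hε1 : ε < 1)
    (hπ0 : ∀ a, 0 ≤ π a) (hπ1 : ∑ a, π a = 1)
    (hJ0 : ∀ a b, 0 ≤ J a b)
    (hJ1 : ∀ a, ∑ b, J a b = π a) (hJ2 : ∀ b, ∑ a, J a b = π b)
    (φ : Fin N → A)
    (hemp : ∀ a, |((Finset.univ.filter (fun i => φ i = a)).card : ℝ) / N - π a| < ε)
    (hJmin : ∀ a b, 2 * (Fintype.card A : ℝ) * ε + (Fintype.card A : ℝ) ^ 2 / N < J a b) :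
    ∃ σ : Equiv.Perm (Fin N),
      (∀ i, (σ i).val = 0 ↔ i.val = N - 1) ∧
      (lineGraph σ).Connected ∧
      ∀ a b,
        |((Finset.univ.filter
            (fun k : Fin N => k.val < N - 1 ∧ φ k = a ∧ φ (σ k) = b)).card : ℝ) / ((N : ℝ) - 1)
          - J a b|
        < 2 * (Fintype.card A : ℝ) * ε + 3 * (Fintype.card A : ℝ) ^ 2 / N := by
  classical
  have : Nonempty A := ⟨φ ⟨0, hN⟩⟩
  set K : ℝ := (Fintype.card A : ℝ) with hK
  have hK1 : 1 ≤ K := by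
    have : 0 < Fintype.card A := Fintype.card_pos
    rw [hK]; exact_mod_cast this
  have hNR : (0 : ℝ) < N := by exact_mod_cast hN
  have hN2 : 2 ≤ N := by
    by_contra hlt
    have hN1 : N = 1 := by omega
    let a : A := φ ⟨0, hN⟩
    have h1 := hJmin a a
    have h2 : J a a ≤ π a := by
      rw [← hJ1 a]
      exact Finset.single_le_sum (f := fun b => J a b) (fun b _ => hJ0 a b) (Finset.mem_univ a)
    have h3 : π a ≤ 1 := by
      rw [← hπ1]
      exact Finset.single_le_sum (f := π) (fun b _ => hπ0 b) (Finset.mem_univ a)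
    rw [hN1] at h1
    simp only [Nat.cast_one, div_one] at h1
    have : 0 < 2 * K * ε := by positivity
    nlinarith
  have hN2R : (2 : ℝ) ≤ N := by exact_mod_cast hN2
  let c : A → ℕ := fun a => (Finset.univ.filter (fun i => φ i = a)).card
  let x : A → A → ℝ := fun a b => N * J a b + (if a = b then (c a : ℝ) - N * π a else 0)
  have hc : ∀ a, |(c a : ℝ) - N * π a| < N * ε := by
    intro a
    have h := hemp a
    have e : (c a : ℝ) - N * π a = N * ((c a : ℝ) / N - π a) := by field_simp
    rw [e, abs_mul, abs_of_pos hNR]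
    exact mul_lt_mul_of_pos_left h hNR
  have hNε : 0 < N * ε := by positivity
  have hxJ : ∀ a b, |x a b - N * J a b| < N * ε := by
    intro a b
    simp only [x, add_sub_cancel_left]
    split_ifs
    · exact hc a
    · simpa using hNε
  have hx : ∀ a b, K ^ 2 < x a b := by
    intro a b
    have h1 := (abs_lt.1 (hxJ a b)).1
    have h2 := mul_lt_mul_of_pos_left (hJmin a b) hNR
    have h3 : (N : ℝ) * (2 * K * ε + K ^ 2 / N) = 2 * K * (N * ε) + K ^ 2 := by field_simp
    rw [h3] at h2
    nlinarith
  obtain ⟨m, hmpos, hm1, hm2, hmx⟩ := aux_round x c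
    (by intro a; simp [x, Finset.sum_add_distrib, ← Finset.mul_sum, hJ1])
    (by intro a; simp [x, Finset.sum_add_distrib, ← Finset.mul_sum, hJ2]) hx
  let s : Fin N := ⟨0, hN⟩
  let t : Fin N := ⟨N - 1, by omega⟩
  have hts : t ≠ s := by
    intro h
    have := congrArg Fin.val h
    simp only [s, t] at this
    omega
  obtain ⟨σ, hσ, hσt, hcyc⟩ := aux_place φ m hmpos s t hts hm1 hm2
  refine ⟨σ, ?_, aux_conn σ s t rfl hσt hcyc, ?_⟩
  · intro i
    constructor
    · intro h
      have : σ i = σ t := by rw [hσt]; exact Fin.ext h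
      exact congrArg Fin.val (σ.injective this)
    · intro h
      have : i = t := Fin.ext h
      rw [this, hσt]
  · intro a b
    set P := Finset.univ.filter (fun k : Fin N => k.val < N - 1 ∧ φ k = a ∧ φ (σ k) = b) with hP
    have hup : P.card ≤ m a b := by
      rw [← hσ a b]
      apply Finset.card_le_card
      intro k hk
      simp only [hP, Finset.mem_filter, Finset.mem_univ, true_and] at hk ⊢
      exact hk.2
    have hlow : m a b ≤ P.card + 1 := by
      rw [← hσ a b]
      refine le_trans (Finset.card_le_card ?_) (Finset.card_insert_le t P)
      intro k hk
      simp only [hP, Finset.mem_filter, Finset.mem_univ, true_and, Finset.mem_insert] at hk ⊢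
      by_cases h : k = t
      · exact Or.inl h
      · refine Or.inr ⟨?_, hk⟩
        have h1 := k.isLt
        have h2 : k.val ≠ N - 1 := fun h' => h (Fin.ext h')
        omega
    have hPN : P.card ≤ N - 1 := by
      have : P.card ≤ (Finset.univ.erase t).card := by
        apply Finset.card_le_card
        intro k hk
        simp only [hP, Finset.mem_filter, Finset.mem_univ, true_and] at hk
        refine Finset.mem_erase.2 ⟨?_, Finset.mem_univ _⟩
        intro h
        rw [h] at hk
        exact lt_irrefl _ hk.1
      simpa using this
    have hupR : (P.card : ℝ) ≤ m a b := by exact_mod_cast hup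
    have hlowR : (m a b : ℝ) ≤ P.card + 1 := by exact_mod_cast hlow
    have hPNR : (P.card : ℝ) ≤ N - 1 := by
      have : P.card + 1 ≤ N := by omega
      have : (P.card : ℝ) + 1 ≤ N := by exact_mod_cast this
      linarith
    have hP0 : (0 : ℝ) ≤ P.card := Nat.cast_nonneg _
    rw [← hK] at hmx
    generalize (P.card : ℝ) = n at *
    have hmab := abs_le.1 (hmx a b)
    have hxab := abs_lt.1 (hxJ a b)
    have hN1 : (0 : ℝ) < N - 1 := by linarith
    have e1 : n / ((N : ℝ) - 1) = n / N + n / ((N : ℝ) - 1) / N := by field_simp; ring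
    have e2 : n / ((N : ℝ) - 1) ≤ 1 := (div_le_one hN1).2 hPNR
    have e3 : 0 ≤ n / ((N : ℝ) - 1) := by positivity
    generalize n / ((N : ℝ) - 1) = v at *
    have e4 : v - J a b = (n + v - N * J a b) / N := by
      have e6 : N * v = n + v := by
        have := congrArg (fun z => (N : ℝ) * z) e1
        simp only [mul_add, mul_div_cancel₀ _ hNR.ne'] at this
        exact this
      rw [← e6]
      field_simp
    have e5 : 2 * K * ε + 3 * K ^ 2 / N = (2 * K * (N * ε) + 3 * K ^ 2) / N := by field_simp
    rw [e4, e5, abs_div, abs_of_pos hNR]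
    apply div_lt_div_of_pos_right _ hNR
    have f1 : N * ε ≤ 2 * K * (N * ε) := by nlinarith
    have f2 : 1 ≤ K ^ 2 := by nlinarith
    rw [abs_lt]
    constructor <;> linarith [hmab.1, hmab.2, hxab.1, hxab.2]
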